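/- Let p ≥ 3 be a prime number. The generating function Σ_{n≥0} |D_n^p| x^n equals 2·x^p·(1 + x·m(x))^{p-2}·( x^2·(x·m(x))′ + 1 ), where m(x) = Σ_{n≥0} M_n x^n and ′ denotes the formal derivative of formal power series. -/

import Mathlib

/-- A Dyck path of semilength `n`, encoded as a word on `Bool`
(`true` = up step `u`, `false` = down step `d`). -/
def IsDyckWord (n : ℕ) (w : List Bool) : Prop :=
  w.length = 2 * n ∧ w.count true = n ∧ w.count false = n ∧
    ∀ p : List Bool, p <+: w → p.count false ≤ p.count true

/-- The (0-based) indices of the up steps of `w`. -/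
def upIdxs (w : List Bool) : List ℕ := w.findIdxs (· == true)

/-- The (0-based) indices of the down steps of `w`. -/
def downIdxs (w : List Bool) : List ℕ := w.findIdxs (· == false)

/-- `rStat w i` is the number of `d`'s strictly between the `i`-th and the
`(i+1)`-st `u` of `w` (with `i` 1-indexed). -/
def rStat (w : List Bool) (i : ℕ) : ℕ :=
  ((w.take ((upIdxs w).getD i 0)).drop ((upIdxs w).getD (i - 1) 0 + 1)).count false

/-- `sStat w i` is the number of `u`'s strictly between the `i`-th and the
`(i+1)`-st `d` of `w` (with `i` 1-indexed). -/
def sStat (w : List Bool) (i : ℕ) : ℕ :=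
  ((w.take ((downIdxs w).getD i 0)).drop ((downIdxs w).getD (i - 1) 0 + 1)).count true

/-- The statistic `L(D) = ∏_{i=1}^{n-1} C(r_i + s_i, r_i)` of a Dyck path of semilength `n`. -/
def LStat (n : ℕ) (w : List Bool) : ℕ :=
  ∏ i ∈ Finset.Icc 1 (n - 1), Nat.choose (rStat w i + sStat w i) (rStat w i)

/-- `dyckL n k` = the set `𝒟ₙᵏ` of Dyck paths of semilength `n` with `L(D) = k`. -/
def dyckL (n k : ℕ) : Set (List Bool) := {w | IsDyckWord n w ∧ LStat n w = k}

/-- A Motzkin path, encoded as a word on `Option Bool`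
(`some true` = up, `some false` = down, `none` = horizontal). -/
def IsMotzkinWord (w : List (Option Bool)) : Prop :=
  w.count (some false) = w.count (some true) ∧
    ∀ p : List (Option Bool), p <+: w → p.count (some false) ≤ p.count (some true)

/-- `motzkin n` = the `n`-th Motzkin number `Mₙ`, the number of Motzkin paths of length `n`. -/
noncomputable def motzkin (n : ℕ) : ℕ :=
  {w : List (Option Bool) | w.length = n ∧ IsMotzkinWord w}.ncard

/-- The Motzkin ballot number `T_{n,k}`: the number of Motzkin paths of length `n`
whose first down step is in position `k` (1-indexed); by convention `T_{k-1,k} = 1`,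
counting the path of `k-1` horizontal steps. -/
noncomputable def motzkinBallot (n k : ℕ) : ℕ :=
  if n + 1 = k then 1
  else
    {w : List (Option Bool) | w.length = n ∧ IsMotzkinWord w ∧
      w.getD (k - 1) none = some false ∧ ∀ j < k - 1, w.getD j none ≠ some false}.ncard

/-- Motzkin numbers with integer index: `Mᵢ = 0` for `i < 0`. -/
noncomputable def motzkinZ (i : ℤ) : ℤ := if 0 ≤ i then (motzkin i.toNat : ℤ) else 0

/-- Motzkin ballot numbers with integer first index: `T_{n,k} = 0` for `n < 0`. -/
noncomputable def motzkinBallotZ (n : ℤ) (k : ℕ) : ℤ :=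
  if 0 ≤ n then (motzkinBallot n.toNat k : ℤ) else 0

/-- The set of returns of a Dyck path `w` of semilength `n`:
indices `1 ≤ k ≤ n` such that the path touches the `x`-axis after `2k` steps. -/
def returns (n : ℕ) (w : List Bool) : Finset ℕ :=
  (Finset.Icc 1 n).filter fun k => (w.take (2 * k)).count false = (w.take (2 * k)).count true

/-- `dyckRS n r s` = the set `𝒟ₙ^{r,s}` of Dyck paths of semilength `n` having exactly one
index `i` with `rᵢ > 0` and `sᵢ > 0`, and such that at that index `rᵢ = r` and `sᵢ = s`. -/
def dyckRS (n r s : ℕ) : Set (List Bool) :=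
  {w | IsDyckWord n w ∧ ∃ i ∈ Finset.Icc 1 (n - 1),
    (0 < rStat w i ∧ 0 < sStat w i) ∧ rStat w i = r ∧ sStat w i = s ∧
      ∀ j ∈ Finset.Icc 1 (n - 1), 0 < rStat w j ∧ 0 < sStat w j → j = i}

/-- `twoStars n w k₁ k₂` says that `k₁ < k₂` are exactly the two indices `i` of `w`
with `rᵢ > 0` and `sᵢ > 0`. -/
def twoStars (n : ℕ) (w : List Bool) (k₁ k₂ : ℕ) : Prop :=
  k₁ ∈ Finset.Icc 1 (n - 1) ∧ k₂ ∈ Finset.Icc 1 (n - 1) ∧ k₁ < k₂ ∧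
    (0 < rStat w k₁ ∧ 0 < sStat w k₁) ∧ (0 < rStat w k₂ ∧ 0 < sStat w k₂) ∧
    ∀ j ∈ Finset.Icc 1 (n - 1), 0 < rStat w j ∧ 0 < sStat w j → j = k₁ ∨ j = k₂

/-- `xStat w k` = the number of indices `i < k` with `rᵢ = 0` and `sᵢ > 0`. -/
def xStat (w : List Bool) (k : ℕ) : ℕ :=
  ((Finset.Ico 1 k).filter fun i => rStat w i = 0 ∧ 0 < sStat w i).card

/-- `yStat w k` = the number of indices `i < k` with `rᵢ > 0` and `sᵢ = 0`. -/
def yStat (w : List Bool) (k : ℕ) : ℕ :=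
  ((Finset.Ico 1 k).filter fun i => 0 < rStat w i ∧ sStat w i = 0).card

/-- The generating function `m(x) = Σ Mₙ xⁿ` of the Motzkin numbers, over `ℚ`. -/
noncomputable def motzkinGF : PowerSeries ℚ := PowerSeries.mk fun n => (motzkin n : ℚ)

/-! ### Lists of steps -/

/-- A path in the quarter plane from height `t` to height `0`. -/
def IsPath (t : ℕ) (w : List (Option Bool)) : Prop :=
  w.count (some false) = t + w.count (some true) ∧
    ∀ p : List (Option Bool), p <+: w → p.count (some false) ≤ t + p.count (some true)

theorem isMotzkinWord_iff_isPath (w : List (Option Bool)) : IsMotzkinWord w ↔ IsPath 0 w := by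
  simp [IsMotzkinWord, IsPath]

theorem forall_prefix_cons {A : Type*} (a : A) (w : List A) (P : List A → Prop) :
    (∀ p, p <+: a :: w → P p) ↔ P [] ∧ ∀ p, p <+: w → P (a :: p) := by
  constructor
  · intro h
    exact ⟨h [] List.nil_prefix, fun p hp => h _ (List.cons_prefix_cons.2 ⟨rfl, hp⟩)⟩
  · rintro ⟨h0, h1⟩ p hp
    rcases List.prefix_cons_iff.1 hp with rfl | ⟨q, rfl, hq⟩
    · exact h0
    · exact h1 q hq

theorem isPath_nil (t : ℕ) : IsPath t [] ↔ t = 0 := by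
  simp [IsPath]; omega

theorem isPath_none_cons (t : ℕ) (w : List (Option Bool)) :
    IsPath t (none :: w) ↔ IsPath t w := by
  simp [IsPath, forall_prefix_cons]

theorem isPath_up_cons (t : ℕ) (w : List (Option Bool)) :
    IsPath t (some true :: w) ↔ IsPath (t + 1) w := by
  simp only [IsPath, forall_prefix_cons]
  simp [add_assoc, add_comm]

theorem isPath_succ_down_cons (t : ℕ) (w : List (Option Bool)) :
    IsPath (t + 1) (some false :: w) ↔ IsPath t w := by
  simp only [IsPath, forall_prefix_cons]
  simp [show ∀ a, t + 1 + a = t + a + 1 by intro a; omega]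

theorem not_isPath_zero_down_cons (w : List (Option Bool)) : ¬ IsPath 0 (some false :: w) := by
  intro h
  simpa using h.2 [some false] (List.cons_prefix_cons.2 ⟨rfl, List.nil_prefix⟩)

/-! ### Counting words by length -/

/-- The generating function, by length, of the words satisfying `P`. -/
noncomputable def wordGF (P : List (Option Bool) → Prop) : PowerSeries ℚ :=
  PowerSeries.mk fun n => ({w | w.length = n ∧ P w}.ncard : ℚ)

theorem finite_length_eq_and {A : Type*} [Finite A] (P : List A → Prop) (n : ℕ) :
    {w : List A | w.length = n ∧ P w}.Finite :=
  (List.finite_length_eq A n).subset fun _ h => h.1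

theorem wordGF_coeff_zero (P : List (Option Bool) → Prop) [Decidable (P [])] :
    PowerSeries.coeff 0 (wordGF P) = if P [] then 1 else 0 := by
  rw [wordGF, PowerSeries.coeff_mk]
  split_ifs with h
  · have : {w : List (Option Bool) | w.length = 0 ∧ P w} = {[]} := by
      ext w; simp only [List.length_eq_zero_iff, Set.mem_ofPred_eq, Set.mem_singleton_iff]
      exact ⟨fun h => h.1, by rintro rfl; exact ⟨rfl, h⟩⟩
    rw [this]; simp
  · have : {w : List (Option Bool) | w.length = 0 ∧ P w} = ∅ := by
      ext w; simp only [List.length_eq_zero_iff, Set.mem_ofPred_eq, Set.mem_empty_iff_false, iff_false]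
      rintro ⟨rfl, h'⟩; exact h h'
    rw [this]; simp

theorem wordGF_coeff_succ (P : List (Option Bool) → Prop) (n : ℕ) :
    PowerSeries.coeff (n + 1) (wordGF P) =
      PowerSeries.coeff n (wordGF fun w => P (none :: w)) +
      PowerSeries.coeff n (wordGF fun w => P (some true :: w)) +
      PowerSeries.coeff n (wordGF fun w => P (some false :: w)) := by
  simp only [wordGF, PowerSeries.coeff_mk]
  have hc (a : Option Bool) : {w : List (Option Bool) | w.length = n ∧ P (a :: w)}.ncard =
      ((a :: ·) '' {w : List (Option Bool) | w.length = n ∧ P (a :: w)}).ncard :=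
    (Set.ncard_image_of_injective _ List.cons_injective).symm
  have hf (a : Option Bool) :
      ((a :: ·) '' {w : List (Option Bool) | w.length = n ∧ P (a :: w)}).Finite :=
    (finite_length_eq_and _ _).image _
  have hu : {w : List (Option Bool) | w.length = n + 1 ∧ P w} =
      ((none :: ·) '' {w | w.length = n ∧ P (none :: w)} ∪
      (some true :: ·) '' {w | w.length = n ∧ P (some true :: w)}) ∪
      (some false :: ·) '' {w | w.length = n ∧ P (some false :: w)} := by
    ext w
    rcases w with _ | ⟨_ | _ | _, w⟩ <;> simp
  have h1 : Disjoint ((none :: ·) '' {w | w.length = n ∧ P (none :: w)})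
      ((some true :: ·) '' {w | w.length = n ∧ P (some true :: w)}) := by
    rw [Set.disjoint_left]; rintro _ ⟨a, _, rfl⟩; simp
  have h2 : Disjoint ((none :: ·) '' {w | w.length = n ∧ P (none :: w)} ∪
      (some true :: ·) '' {w | w.length = n ∧ P (some true :: w)})
      ((some false :: ·) '' {w | w.length = n ∧ P (some false :: w)}) := by
    rw [Set.disjoint_left]; rintro _ (⟨a, _, rfl⟩ | ⟨a, _, rfl⟩) <;> simp
  rw [hu, Set.ncard_union_eq h2 ((hf _).union (hf _)) (hf _),
    Set.ncard_union_eq h1 (hf _) (hf _), ← hc, ← hc, ← hc]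
  push_cast; rfl

theorem wordGF_false : wordGF (fun _ => False) = 0 := by
  ext n; simp [wordGF]

/-! ### The Motzkin series -/

/-- The Motzkin recurrence. -/
def motzkinRec : ℕ → ℚ
  | 0 => 1
  | n + 1 => motzkinRec n + ∑ i : Fin n, motzkinRec i * motzkinRec (n - 1 - i)

/-- The power series solution of `m = 1 + x m + x² m²`. -/
def motzkinSeries : PowerSeries ℚ := PowerSeries.mk motzkinRec

open PowerSeries in
theorem motzkinSeries_eq :
    motzkinSeries = 1 + X * motzkinSeries + X ^ 2 * motzkinSeries ^ 2 := by
  ext n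
  rcases n with _ | _ | n
  · simp [motzkinSeries, motzkinRec, pow_two, mul_assoc]
  · have : (X : PowerSeries ℚ) ^ 2 * motzkinSeries ^ 2 = X * (X * motzkinSeries ^ 2) := by ring
    rw [this]
    simp [motzkinSeries, motzkinRec, coeff_succ_X_mul, coeff_one, coeff_zero_X_mul]
  · have : (X : PowerSeries ℚ) ^ 2 * motzkinSeries ^ 2 = X * (X * motzkinSeries ^ 2) := by ring
    rw [this]
    simp only [map_add, coeff_succ_X_mul]
    rw [pow_two motzkinSeries, coeff_mul, Finset.Nat.sum_antidiagonal_eq_sum_range_succ_mk,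
      Finset.sum_range]
    simp [motzkinSeries, motzkinRec, coeff_one]

open PowerSeries in
/-- The series `f = x m`, in the form in which path counts are products of its powers. -/
theorem X_mul_motzkinSeries_eq : X * motzkinSeries =
    X + X * (X * motzkinSeries) + X * (X * motzkinSeries) ^ 2 := by
  conv_lhs => rw [motzkinSeries_eq]
  ring

open PowerSeries in
theorem wordGF_isPath (h : ℕ) :
    wordGF (IsPath h) = motzkinSeries * (X * motzkinSeries) ^ h := by
  ext n
  induction n generalizing h with
  | zero =>
    classical
    rw [wordGF_coeff_zero]
    rcases h with _ | h
    · simp [isPath_nil, motzkinSeries, motzkinRec]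
    · simp [isPath_nil, pow_succ]
  | succ n ih =>
    rw [wordGF_coeff_succ]
    simp only [isPath_none_cons, isPath_up_cons]
    rcases h with _ | h
    · simp only [not_isPath_zero_down_cons, wordGF_false, map_zero, add_zero]
      have e : motzkinSeries * (X * motzkinSeries) ^ 0 =
          1 + X * (motzkinSeries * (X * motzkinSeries) ^ 0 +
            motzkinSeries * (X * motzkinSeries) ^ 1) := by
        linear_combination motzkinSeries_eq
      rw [e, map_add, coeff_succ_X_mul, map_add, ← ih, ← ih]
      simp [coeff_one]
    · simp only [isPath_succ_down_cons]
      have e : motzkinSeries * (X * motzkinSeries) ^ (h + 1) =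
          X * (motzkinSeries * (X * motzkinSeries) ^ (h + 1) +
            motzkinSeries * (X * motzkinSeries) ^ (h + 2) +
            motzkinSeries * (X * motzkinSeries) ^ h) := by
        linear_combination motzkinSeries * (X * motzkinSeries) ^ h * X_mul_motzkinSeries_eq
      rw [e, coeff_succ_X_mul, map_add, map_add, ← ih, ← ih, ← ih]

theorem motzkinGF_eq_motzkinSeries : motzkinGF = motzkinSeries := by
  have h := wordGF_isPath 0
  rw [pow_zero, mul_one] at h
  rw [← h]
  simp [motzkinGF, motzkin, wordGF, isMotzkinWord_iff_isPath]

/-! ### Gaps in bit lists -/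

/-- `gap l j` is the distance from the `j`-th to the `(j+1)`-st `true` of `l`, where the positions
of `l` start at `1` and the `0`-th `true` is at position `0`. -/
def gap : List Bool → ℕ → ℕ
  | [], _ => 0
  | true :: _, 0 => 1
  | true :: l, j + 1 => gap l j
  | false :: l, 0 => gap l 0 + 1
  | false :: l, j + 1 => gap l (j + 1)

theorem gap_pos (l : List Bool) (j : ℕ) (h : j < l.count true) : 0 < gap l j := by
  induction l generalizing j with
  | nil => simp at h
  | cons a l ih =>
    rcases a with _ | _ <;> rcases j with _ | j <;> simp_all [gap]

theorem gap_append_true_cons (l l' : List Bool) (j : ℕ) :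
    gap (l ++ true :: l') (l.count true + 1 + j) = gap l' j := by
  induction l with
  | nil => simp [gap, add_comm 1 j]
  | cons a l ih =>
    rcases a with _ | _
    · have e : (false :: l).count true + 1 + j = l.count true + j + 1 := by simp; omega
      rw [e, List.cons_append, gap, ← ih]; congr 1; omega
    · have e : (true :: l).count true + 1 + j = (l.count true + 1 + j) + 1 := by simp; omega
      rw [e, List.cons_append, gap, ← ih]

theorem gap_append_true_left (l l' : List Bool) (j : ℕ) (h : j ≤ l.count true) :
    gap (l ++ true :: l') j = gap (l ++ [true]) j := by
  induction l generalizing j with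
  | nil => simp_all [gap]
  | cons a l ih =>
    rcases a with _ | _ <;> rcases j with _ | j <;> simp_all [gap]

theorem gap_append_true_true (l : List Bool) :
    gap (l ++ [true, true]) (l.count true + 1) = 1 := by
  simpa [gap] using gap_append_true_cons l [true] 0

theorem gap_append_false_true (l : List Bool) (j : ℕ) (h : j ≤ l.count true) :
    gap (l ++ [false, true]) j = gap (l ++ [true]) j + if j = l.count true then 1 else 0 := by
  induction l generalizing j with
  | nil => simp_all [gap]
  | cons a l ih =>
    rcases a with _ | _ <;> rcases j with _ | j <;> simp_all [gap]
    omega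

theorem gap_reverse (l : List Bool) (j : ℕ) (h : j ≤ l.count true) :
    gap (l.reverse ++ [true]) j = gap (l ++ [true]) (l.count true - j) := by
  induction l generalizing j with
  | nil => simp_all
  | cons a l ih =>
    rcases a with _ | _
    · have h' : j ≤ l.count true := by simpa using h
      have h2 := gap_append_false_true l.reverse j (by simpa using h')
      rw [ih j h'] at h2
      simp only [List.reverse_cons, List.append_assoc, List.cons_append, List.nil_append, h2]
      rcases hk : l.count true - j with _ | k
      · have : j = l.count true := by omega
        simp [this, gap]
      · have : j ≠ l.count true := by omega
        simp [this, hk, gap]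
    · rcases Nat.lt_or_ge (l.count true) j with h' | h'
      · have e : j = l.count true + 1 := by simp at h; omega
        have h2 := gap_append_true_true l.reverse
        simp_all [gap]
      · have h2 := gap_append_true_left l.reverse [true] j (by simpa using h')
        rw [ih j h'] at h2
        simp only [List.reverse_cons, List.append_assoc, List.cons_append, List.nil_append, h2]
        have e : (true :: l).count true - j = (l.count true - j) + 1 := by simp; omega
        rw [e, gap]

/-! ### Paths with a prescribed gap between two down steps -/

/-- Paths from height `t + i` to `0` such that the `t`-th and `(t+1)`-st down steps are at
distance `q`; the end of the path counts as a down step. -/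
def IsGapPath (q t i : ℕ) (w : List (Option Bool)) : Prop :=
  IsPath (t + i) w ∧ gap (w.map (· == some false) ++ [true]) t = q

open PowerSeries in
theorem wordGF_isGapPath_zero (c i : ℕ) :
    wordGF (IsGapPath (c + 1) 0 i) =
      (X * (1 + X * motzkinSeries)) ^ c * (X * motzkinSeries) ^ i := by
  ext n
  induction n generalizing c i with
  | zero =>
    classical
    rw [wordGF_coeff_zero]
    rcases c with _ | c <;> rcases i with _ | i <;>
      simp [IsGapPath, isPath_nil, gap, pow_succ, mul_assoc]
  | succ n ih =>
    rw [wordGF_coeff_succ]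
    rcases c with _ | c
    · have hN (a : Option Bool) (ha : (a == some false) = false) :
          (fun w => IsGapPath (0 + 1) 0 i (a :: w)) = fun _ => False := by
        funext w
        have : gap (w.map (· == some false) ++ [true]) 0 ≠ 0 := (gap_pos _ _ (by simp)).ne'
        simp [IsGapPath, ha, gap, this]
      rw [hN none rfl, hN (some true) rfl, wordGF_false, map_zero, zero_add, zero_add]
      rcases i with _ | i
      · simp [IsGapPath, not_isPath_zero_down_cons, wordGF_false, coeff_one]
      · have hD : (fun w => IsGapPath (0 + 1) 0 (i + 1) (some false :: w)) = IsPath i := by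
          funext w
          simp [IsGapPath, gap, isPath_succ_down_cons]
        rw [hD, wordGF_isPath]
        have e : (X * (1 + X * motzkinSeries)) ^ 0 * (X * motzkinSeries) ^ (i + 1) =
          X * (motzkinSeries * (X * motzkinSeries) ^ i) := by ring
        rw [e, coeff_succ_X_mul]
    · have hN : (fun w => IsGapPath (c + 1 + 1) 0 i (none :: w)) = IsGapPath (c + 1) 0 i := by
        funext w
        simp [IsGapPath, gap, isPath_none_cons]
      have hU : (fun w => IsGapPath (c + 1 + 1) 0 i (some true :: w)) =
          IsGapPath (c + 1) 0 (i + 1) := by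
        funext w
        simp [IsGapPath, gap, isPath_up_cons]
      have hD : (fun w => IsGapPath (c + 1 + 1) 0 i (some false :: w)) = fun _ => False := by
        funext w
        simp [IsGapPath, gap]
      rw [hN, hU, hD, wordGF_false, map_zero, add_zero, ih, ih, ← map_add]
      have e : (X * (1 + X * motzkinSeries)) ^ (c + 1) * (X * motzkinSeries) ^ i =
          X * ((X * (1 + X * motzkinSeries)) ^ c * (X * motzkinSeries) ^ i +
            (X * (1 + X * motzkinSeries)) ^ c * (X * motzkinSeries) ^ (i + 1)) := by ring
      rw [e, coeff_succ_X_mul]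

open PowerSeries in
theorem wordGF_isGapPath (c t i : ℕ) :
    wordGF (IsGapPath (c + 1) t i) =
      (X * (1 + X * motzkinSeries)) ^ c * (X * motzkinSeries) ^ (t + i) := by
  ext n
  induction n generalizing t i with
  | zero =>
    rcases t with _ | t
    · rw [wordGF_isGapPath_zero, zero_add]
    · classical
      rw [wordGF_coeff_zero]
      simp [IsGapPath, isPath_nil, add_right_comm t 1 i, pow_succ]
  | succ n ih =>
    rcases t with _ | t
    · rw [wordGF_isGapPath_zero, zero_add]
    · rw [wordGF_coeff_succ]
      have hN : (fun w => IsGapPath (c + 1) (t + 1) i (none :: w)) =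
          IsGapPath (c + 1) (t + 1) i := by
        funext w
        simp [IsGapPath, gap, isPath_none_cons]
      have hU : (fun w => IsGapPath (c + 1) (t + 1) i (some true :: w)) =
          IsGapPath (c + 1) (t + 1) (i + 1) := by
        funext w
        simp [IsGapPath, gap, isPath_up_cons, add_assoc]
      have hD : (fun w => IsGapPath (c + 1) (t + 1) i (some false :: w)) =
          IsGapPath (c + 1) t i := by
        funext w
        simp [IsGapPath, gap, add_right_comm t 1 i, isPath_succ_down_cons]
      rw [hN, hU, hD, ih, ih, ih, ← map_add, ← map_add]
      have e : (X * (1 + X * motzkinSeries)) ^ c * (X * motzkinSeries) ^ (t + 1 + i) =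
          X * ((X * (1 + X * motzkinSeries)) ^ c * (X * motzkinSeries) ^ (t + 1 + i) +
            (X * (1 + X * motzkinSeries)) ^ c * (X * motzkinSeries) ^ (t + 1 + (i + 1)) +
            (X * (1 + X * motzkinSeries)) ^ c * (X * motzkinSeries) ^ (t + i)) := by
        linear_combination (X * (1 + X * motzkinSeries)) ^ c * (X * motzkinSeries) ^ (t + i) *
          X_mul_motzkinSeries_eq
      conv_rhs => rw [e, coeff_succ_X_mul]

open PowerSeries in
/-- The derivative of `f = x m` inverts `1 - f²`. -/
theorem derivative_identity :
    (X ^ 2 * PowerSeries.derivative ℚ (X * motzkinSeries) + 1) *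
      (1 - (X * motzkinSeries) ^ 2) = 1 := by
  set f := X * motzkinSeries with hf
  have h : f = X + X * f + X * f ^ 2 := X_mul_motzkinSeries_eq
  have hd : PowerSeries.derivative ℚ f = 1 + f + X * PowerSeries.derivative ℚ f +
      f ^ 2 + 2 * X * f * PowerSeries.derivative ℚ f := by
    conv_lhs => rw [h]
    simp [pow_two]
    ring
  set g := PowerSeries.derivative ℚ f
  linear_combination (-(X * g) - f) * h + X * f * hd

/-! ### Turns of a word -/

/-- For every letter `c` of a word, the bit telling whether that letter ends its run. -/
def turnBits (c : Bool) : List Bool → List Bool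
  | [] => []
  | a :: w => if a = c then (!decide (w.head? = some c)) :: turnBits c w else turnBits c w

/-- The word whose runs of `true` and of `false` end as prescribed by the bit lists `α` and `β`;
the first run consists of letters `m`. -/
def ofTurns : Bool → List Bool → List Bool → List Bool
  | true, a :: α, β => true :: ofTurns (!a) α β
  | true, [], _ => []
  | false, α, b :: β => false :: ofTurns b α β
  | false, _, [] => []
termination_by _ α β => α.length + β.length

theorem length_turnBits (c : Bool) (w : List Bool) : (turnBits c w).length = w.count c := by
  induction w with
  | nil => rfl
  | cons a w ih => by_cases h : a = c <;> simp [turnBits, h, ih]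

theorem getLast?_turnBits (c : Bool) (w : List Bool) : (turnBits c w).getLast? ≠ some false := by
  induction w with
  | nil => simp [turnBits]
  | cons a w ih =>
    by_cases h : a = c
    · simp only [turnBits, h, if_true]
      rcases hw : turnBits c w with _ | ⟨b, l⟩
      · have : w.head? ≠ some c := by
          rintro h'
          rcases w with _ | ⟨x, w⟩ <;> simp_all [turnBits]
        simp [this]
      · rw [hw] at ih; simpa using ih
    · simpa [turnBits, h] using ih

theorem ofTurns_turnBits (m : Bool) (w : List Bool) (h : ∀ a, w.head? = some a → a = m) :
    ofTurns m (turnBits true w) (turnBits false w) = w := by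
  induction w generalizing m with
  | nil => cases m <;> simp [turnBits, ofTurns]
  | cons a w ih =>
    obtain rfl : a = m := h a rfl
    cases a <;> simp only [turnBits, ofTurns, if_true, if_false, List.cons.injEq, true_and,
      Bool.false_eq_true, Bool.true_eq_false] <;> apply ih <;>
      intro a ha <;> cases a <;> simp [ha]

theorem head?_ofTurns_true (α β : List Bool) :
    (ofTurns true α β).head? = if α = [] then none else some true := by
  cases α <;> simp [ofTurns]

theorem head?_ofTurns_false (α β : List Bool) :
    (ofTurns false α β).head? = if β = [] then none else some false := by
  cases β <;> simp [ofTurns]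

theorem eq_nil_of_count_eq_zero {l : List Bool} (h : l.getLast? ≠ some false)
    (h0 : l.count true = 0) : l = [] := by
  rcases List.eq_nil_or_concat l with rfl | ⟨l, a, rfl⟩
  · rfl
  · cases a <;> simp_all

theorem getLast?_tail {a : Bool} {l : List Bool} (h : (a :: l).getLast? ≠ some false) :
    l.getLast? ≠ some false := by
  cases l <;> simp_all

theorem turnBits_ofTurns (m : Bool) (α β : List Bool) (hα : α.getLast? ≠ some false)
    (hβ : β.getLast? ≠ some false)
    (hc : β.count true = α.count true + if m then 0 else 1) :
    turnBits true (ofTurns m α β) = α ∧ turnBits false (ofTurns m α β) = β := by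
  fun_induction ofTurns m α β with
  | case1 a α β ih =>
    have := ih (getLast?_tail hα) hβ (by cases a <;> simp_all)
    cases a
    · have : α ≠ [] := by rintro rfl; simp at hα
      simp_all [turnBits, head?_ofTurns_true]
    · have : β ≠ [] := by rintro rfl; simp at hc
      simp_all [turnBits, head?_ofTurns_false]
  | case2 β =>
    simp [turnBits, eq_nil_of_count_eq_zero hβ (by simpa using hc)]
  | case3 α b β ih =>
    have := ih hα (getLast?_tail hβ) (by cases b <;> simp_all)
    cases b
    · have : β ≠ [] := by rintro rfl; simp at hβ
      simp_all [turnBits, head?_ofTurns_false]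
    · simp_all [turnBits, head?_ofTurns_true]
  | case4 α => simp at hc

theorem count_turnBits (w : List Bool) :
    (turnBits true w).count true + (if w.head? = some false then 1 else 0) =
      (turnBits false w).count true + (if w.getLast? = some true then 1 else 0) := by
  induction w with
  | nil => rfl
  | cons a w ih =>
    rcases w with _ | ⟨b, w⟩
    · cases a <;> simp [turnBits]
    · cases a <;> cases b <;> simp_all [turnBits]
      omega

theorem nonneg_iff_turnBits (h : ℕ) (w : List Bool) (hw : w.getLast? ≠ some true) :
    (∀ p : List Bool, p <+: w → p.count false ≤ h + p.count true) ↔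
    ∀ i, ((turnBits true w).take i).count true + (if w.head? = some false then 1 else 0) ≤
      ((turnBits false w).take (i + h)).count true := by
  induction w generalizing h with
  | nil => simp [turnBits]
  | cons a w ih =>
    have hw' : w.getLast? ≠ some true := by cases w <;> simp_all
    rw [forall_prefix_cons]
    cases a
    · rcases h with _ | h
      · have h1 : ¬ ∀ p : List Bool, p <+: w → (false :: p).count false ≤ 0 + (false :: p).count true :=
          fun h => by simpa using h [] List.nil_prefix
        have h2 : ¬ ∀ i, ((turnBits true (false :: w)).take i).count true +
            (if (false :: w).head? = some false then 1 else 0) ≤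
            ((turnBits false (false :: w)).take (i + 0)).count true :=
          fun h => by simpa using h 0
        tauto
      · have := ih h hw'
        have e : (∀ p : List Bool, p <+: w → (false :: p).count false ≤ h + 1 + (false :: p).count true) ↔
            ∀ p : List Bool, p <+: w → p.count false ≤ h + p.count true := by
          simp [show ∀ a, h + 1 + a = h + a + 1 by intro a; omega]
        rw [e, this]
        rcases w with _ | ⟨b, w⟩
        · simp [turnBits, ← add_assoc]
        · cases b <;> simp [turnBits, ← add_assoc]
    · have := ih (h + 1) hw'
      have e : (∀ p : List Bool, p <+: w → (true :: p).count false ≤ h + (true :: p).count true) ↔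
          ∀ p : List Bool, p <+: w → p.count false ≤ h + 1 + p.count true := by
        simp [show ∀ a, h + 1 + a = h + (a + 1) by intro a; omega]
      rw [e, this]
      rcases w with _ | ⟨b, w⟩
      · simp at hw
      · simp only [List.count_nil, zero_le, true_and]
        constructor
        · rintro H (_ | i)
          · simp
          · have := H i
            cases b <;> simp_all [turnBits, add_comm h 1, ← add_assoc]
        · intro H i
          have := H (i + 1)
          cases b <;> simp_all [turnBits, add_comm h 1, ← add_assoc]

/-! ### The statistics in terms of turns -/

/-- The common form of `rStat` and `sStat`. -/
def gapStat (c : Bool) (w : List Bool) (i : ℕ) : ℕ :=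
  ((w.take ((w.findIdxs (· == c)).getD i 0)).drop
    ((w.findIdxs (· == c)).getD (i - 1) 0 + 1)).count (!c)

theorem rStat_eq_gapStat : rStat = gapStat true := rfl

theorem sStat_eq_gapStat : sStat = gapStat false := rfl

theorem getD_map_succ (l : List ℕ) (i : ℕ) (h : i < l.length) :
    (l.map (· + 1)).getD i 0 = l.getD i 0 + 1 := by
  simp [List.getD_eq_getElem?_getD, List.getElem?_eq_getElem h]

theorem findIdxs_cons_self (c : Bool) (w : List Bool) :
    (c :: w).findIdxs (· == c) = 0 :: (w.findIdxs (· == c)).map (· + 1) := by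
  rw [List.findIdxs_cons, List.findIdxs_start]; simp

theorem findIdxs_cons_not (c : Bool) (w : List Bool) :
    ((!c) :: w).findIdxs (· == c) = (w.findIdxs (· == c)).map (· + 1) := by
  rw [List.findIdxs_cons, List.findIdxs_start]; simp

theorem length_findIdxs_beq (c : Bool) (w : List Bool) :
    (w.findIdxs (· == c)).length = w.count c := by
  rw [List.length_findIdxs]; rfl

theorem gapStat_cons_self (c : Bool) (w : List Bool) (i : ℕ) (h : i + 1 < w.count c) :
    gapStat c (c :: w) (i + 2) = gapStat c w (i + 1) := by
  rw [← length_findIdxs_beq] at h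
  simp only [gapStat, findIdxs_cons_self, Nat.add_sub_cancel,
    show i + 2 - 1 = i + 1 from rfl, List.getD_cons_succ]
  rw [getD_map_succ _ _ h, getD_map_succ _ _ (by omega)]
  simp

theorem gapStat_cons_not (c : Bool) (w : List Bool) (i : ℕ) (h : i + 1 < w.count c) :
    gapStat c ((!c) :: w) (i + 1) = gapStat c w (i + 1) := by
  rw [← length_findIdxs_beq] at h
  simp only [gapStat, findIdxs_cons_not, Nat.add_sub_cancel]
  rw [getD_map_succ _ _ h, getD_map_succ _ _ (by omega)]
  simp

theorem count_take_findIdxs (c : Bool) (w : List Bool) (h : 0 < w.count c) :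
    (w.take ((w.findIdxs (· == c)).getD 0 0)).count (!c) =
      if w.head? = some (!c) then gap (turnBits (!c) w) 0 else 0 := by
  induction w with
  | nil => simp at h
  | cons a w ih =>
    rcases Bool.eq_or_eq_not a c with rfl | rfl
    · simp
    · have h' : 0 < w.count c := by simpa using h
      rw [findIdxs_cons_not, getD_map_succ _ _ (by rwa [length_findIdxs_beq])]
      have := ih h'
      rcases w with _ | ⟨b, w⟩
      · simp at h'
      · rcases Bool.eq_or_eq_not b c with rfl | rfl <;> simp_all [turnBits, gap]

theorem gapStat_one (c : Bool) (w : List Bool) (h : 0 < w.count c) :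
    gapStat c (c :: w) 1 = if w.head? = some (!c) then gap (turnBits (!c) w) 0 else 0 := by
  rw [← count_take_findIdxs c w h, gapStat, findIdxs_cons_self, List.getD_cons_succ,
    getD_map_succ _ _ (by rwa [length_findIdxs_beq])]
  simp

theorem gapStat_eq_gap (c : Bool) (w : List Bool) (i : ℕ) (h : i + 1 < w.count c) :
    gapStat c w (i + 1) = if (turnBits c w).getD i false then
      gap (turnBits (!c) w) (((turnBits c w).take i).count true +
        if w.head? = some (!c) then 1 else 0) else 0 := by
  induction w generalizing i with
  | nil => simp at h
  | cons a w ih =>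
    rcases Bool.eq_or_eq_not a c with rfl | rfl
    · rcases i with _ | i
      · rw [gapStat_one _ _ (by simpa using h)]
        rcases w with _ | ⟨b, w⟩
        · simp at h
        · rcases Bool.eq_or_eq_not b a with rfl | rfl <;> simp [turnBits]
      · have h' : i + 1 < w.count a := by simpa using h
        rw [gapStat_cons_self _ _ _ h', ih _ h']
        rcases w with _ | ⟨b, w⟩
        · simp at h'
        · rcases Bool.eq_or_eq_not b a with rfl | rfl <;> simp [turnBits]
    · have h' : i + 1 < w.count c := by simpa using h
      rw [gapStat_cons_not _ _ _ h', ih _ h']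
      rcases w with _ | ⟨b, w⟩
      · simp at h'
      · rcases Bool.eq_or_eq_not b c with rfl | rfl <;> simp [turnBits, gap]

/-! ### Dyck words and pairs of bit lists -/

/-- The Dyck word whose `i`-th down (up) step ends its run iff the first (second) bit of the `i`-th
entry of `Z` is set. -/
def dyckOf (Z : List (Bool × Bool)) : List Bool :=
  ofTurns true (Z.map Prod.snd ++ [true]) (Z.map Prod.fst ++ [true])

section
variable {Z : List (Bool × Bool)}

theorem turnBits_dyckOf (hZ : (Z.map Prod.snd).count true = (Z.map Prod.fst).count true) :
    turnBits true (dyckOf Z) = Z.map Prod.snd ++ [true] ∧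
      turnBits false (dyckOf Z) = Z.map Prod.fst ++ [true] :=
  turnBits_ofTurns _ _ _ (by simp) (by simp) (by simp [hZ])

theorem head?_dyckOf (Z : List (Bool × Bool)) : (dyckOf Z).head? = some true := by
  simp [dyckOf, head?_ofTurns_true]

theorem count_dyckOf (hZ : (Z.map Prod.snd).count true = (Z.map Prod.fst).count true) (c : Bool) :
    (dyckOf Z).count c = Z.length + 1 := by
  rw [← length_turnBits]
  cases c
  · simp [(turnBits_dyckOf hZ).2]
  · simp [(turnBits_dyckOf hZ).1]

theorem isDyckWord_dyckOf_iff
    (hZ : (Z.map Prod.snd).count true = (Z.map Prod.fst).count true) :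
    IsDyckWord (Z.length + 1) (dyckOf Z) ↔
      ∀ i, ((Z.take i).map Prod.snd).count true ≤ ((Z.take i).map Prod.fst).count true := by
  have hlast : (dyckOf Z).getLast? ≠ some true := by
    intro h
    have := count_turnBits (dyckOf Z)
    simp [h, head?_dyckOf, turnBits_dyckOf hZ, hZ] at this
  have hlen : (dyckOf Z).length = 2 * (Z.length + 1) := by
    have := List.count_not_add_count (dyckOf Z) true
    rw [count_dyckOf hZ, count_dyckOf hZ] at this
    omega
  have h := nonneg_iff_turnBits 0 _ hlast
  simp only [(turnBits_dyckOf hZ).1, (turnBits_dyckOf hZ).2, head?_dyckOf, zero_add, add_zero,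
    List.take_append, List.length_map, List.count_append] at h
  simp [IsDyckWord, hlen, count_dyckOf hZ, h]

theorem exists_dyckOf_eq {n : ℕ} {w : List Bool} (hw : IsDyckWord (n + 1) w) :
    ∃ Z : List (Bool × Bool), Z.length = n ∧
      (Z.map Prod.snd).count true = (Z.map Prod.fst).count true ∧ dyckOf Z = w := by
  obtain ⟨hl, ht, hf, hp⟩ := hw
  have hsplit (c : Bool) (hc : w.count c = n + 1) :
      ∃ l, l.length = n ∧ turnBits c w = l ++ [true] := by
    have h1 := getLast?_turnBits c w
    have h2 := length_turnBits c w
    rcases List.eq_nil_or_concat (turnBits c w) with h | ⟨l, a, h⟩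
    · simp [h, hc] at h2
    · refine ⟨l, ?_, ?_⟩
      · simp [h, hc] at h2; exact h2
      · cases a <;> simp_all
  obtain ⟨α, hα, hα'⟩ := hsplit true ht
  obtain ⟨β, hβ, hβ'⟩ := hsplit false hf
  have hhead : w.head? = some true := by
    rcases w with _ | ⟨a, w⟩
    · simp at ht
    · have := hp [a] (List.cons_prefix_cons.2 ⟨rfl, List.nil_prefix⟩)
      cases a <;> simp_all
  have hlast : w.getLast? ≠ some true := by
    intro h
    rcases List.eq_nil_or_concat w with rfl | ⟨v, a, rfl⟩
    · simp at ht
    · rw [List.concat_eq_append] at *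
      have := hp v (List.prefix_append _ _)
      simp at h
      simp_all
  have hc := count_turnBits w
  refine ⟨β.zip α, by simp [hα, hβ], ?_, ?_⟩
  · rw [List.map_fst_zip (by omega), List.map_snd_zip (by omega)]
    simpa [hα', hβ', hhead, hlast] using hc
  · rw [dyckOf, List.map_fst_zip (by omega), List.map_snd_zip (by omega), ← hα', ← hβ']
    exact ofTurns_turnBits _ _ (by simp [hhead])

theorem rStat_dyckOf (hZ : (Z.map Prod.snd).count true = (Z.map Prod.fst).count true) (i : ℕ)
    (hi : i < Z.length) :
    rStat (dyckOf Z) (i + 1) = if Z[i].2 then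
      gap (Z.map Prod.fst ++ [true]) (((Z.take i).map Prod.snd).count true) else 0 := by
  rw [rStat_eq_gapStat, gapStat_eq_gap _ _ _ (by rw [count_dyckOf hZ]; omega)]
  simp [turnBits_dyckOf hZ, head?_dyckOf, List.take_append, hi, hi.le, Nat.sub_eq_zero_of_le]

theorem sStat_dyckOf (hZ : (Z.map Prod.snd).count true = (Z.map Prod.fst).count true) (i : ℕ)
    (hi : i < Z.length) :
    sStat (dyckOf Z) (i + 1) = if Z[i].1 then
      gap (Z.map Prod.snd ++ [true]) (((Z.take i).map Prod.fst).count true + 1) else 0 := by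
  rw [sStat_eq_gapStat, gapStat_eq_gap _ _ _ (by rw [count_dyckOf hZ]; omega)]
  simp [turnBits_dyckOf hZ, head?_dyckOf, List.take_append, hi, hi.le, Nat.sub_eq_zero_of_le]

theorem rStat_sStat_dyckOf_eq_zero_iff
    (hZ : (Z.map Prod.snd).count true = (Z.map Prod.fst).count true) (i : ℕ) (hi : i < Z.length) :
    (rStat (dyckOf Z) (i + 1) = 0 ∨ sStat (dyckOf Z) (i + 1) = 0) ↔ Z[i] ≠ (true, true) := by
  have hle (f : Bool × Bool → Bool) :
      ((Z.take i).map f).count true + (if f Z[i] then 1 else 0) ≤ (Z.map f).count true := by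
    conv_rhs => rw [← List.take_append_drop i Z, List.drop_eq_getElem_cons hi]
    rw [List.map_append, List.count_append, List.map_cons, List.count_cons]
    simp only [beq_iff_eq]
    omega
  rw [rStat_dyckOf hZ i hi, sStat_dyckOf hZ i hi]
  have h1 := hle Prod.fst
  have h2 := hle Prod.snd
  rcases h : Z[i] with ⟨_ | _, _ | _⟩ <;> simp only [h] at h1 h2 ⊢ <;> simp
  simp only [List.map_take, if_true] at h1 h2
  constructor
  · exact (gap_pos _ _ (by simp; omega)).ne'
  · exact (gap_pos _ _ (by simp; omega)).ne'

end

/-! ### Products of binomial coefficients equal to a prime -/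

theorem prod_eq_prime_iff {ι : Type*} (s : Finset ι) (f : ι → ℕ) {p : ℕ} (hp : p.Prime) :
    ∏ i ∈ s, f i = p ↔ ∃ k ∈ s, f k = p ∧ ∀ j ∈ s, j ≠ k → f j = 1 := by
  classical
  constructor
  · intro h
    obtain ⟨k, hk, hpk⟩ := (hp.prime.dvd_finsetProd_iff f).1 h.symm.dvd
    have hfk : f k = p := Nat.dvd_antisymm (h ▸ Finset.dvd_prod_of_mem f hk) hpk
    refine ⟨k, hk, hfk, fun j hj hjk => ?_⟩
    rw [← Finset.mul_prod_erase s f hk, hfk] at h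
    have h1 : ∏ x ∈ s.erase k, f x = 1 :=
      Nat.eq_of_mul_eq_mul_left hp.pos (by rw [h, mul_one])
    exact Finset.prod_eq_one_iff.1 h1 j (Finset.mem_erase.2 ⟨hjk, hj⟩)
  · rintro ⟨k, hk, hfk, h⟩
    rw [Finset.prod_eq_single_of_mem k hk h, hfk]

theorem choose_add_eq_one_iff (r s : ℕ) : (r + s).choose r = 1 ↔ r = 0 ∨ s = 0 := by
  rw [Nat.choose_eq_one_iff]; omega

theorem lt_choose_add (r s : ℕ) : r + s + 4 < (r + s + 4).choose (r + 2) := by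
  induction s with
  | zero =>
    rw [add_zero, ← Nat.choose_symm_of_eq_add (show r + 4 = 2 + (r + 2) by omega)]
    induction r with
    | zero => decide
    | succ r ih =>
      have h := Nat.choose_succ_succ' (r + 4) 1
      rw [Nat.choose_one_right, one_add_one_eq_two] at h
      rw [show r + 1 + 4 = (r + 4) + 1 by omega, h]
      omega
  | succ s ih =>
    rw [show r + (s + 1) + 4 = (r + s + 4) + 1 by omega, Nat.choose_succ_succ' _ (r + 1)]
    rw [show r + 1 + 1 = r + 2 from rfl]
    have : 0 < (r + s + 4).choose (r + 1) := Nat.choose_pos (by omega)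
    omega

theorem choose_add_eq_prime_iff (r s : ℕ) {p : ℕ} (hp : p.Prime) :
    (r + s).choose r = p ↔ r = 1 ∧ s = p - 1 ∨ r = p - 1 ∧ s = 1 := by
  have hp2 := hp.two_le
  constructor
  · intro h
    rcases r with _ | _ | r
    · simp at h; omega
    · simp at h; omega
    · rcases s with _ | _ | s
      · simp at h; omega
      · rw [Nat.choose_symm_add, zero_add, Nat.choose_one_right] at h
        omega
      · exfalso
        have h1 := lt_choose_add r s
        rw [show r + s + 4 = r + 1 + 1 + (s + 1 + 1) by omega, h] at h1
        have h2 : p ∣ (r + 1 + 1 + (s + 1 + 1)).factorial := by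
          rw [← Nat.add_choose_mul_factorial_mul_factorial, ← Nat.choose_symm_add, h, mul_assoc]
          exact dvd_mul_right _ _
        exact absurd ((hp.dvd_factorial).1 h2) (by omega)
  · rintro (⟨rfl, rfl⟩ | ⟨rfl, rfl⟩)
    · simp; omega
    · rw [Nat.choose_symm_add, Nat.choose_one_right]; omega

theorem LStat_dyckOf_eq_prime_iff {Z : List (Bool × Bool)} {p : ℕ} (hp : p.Prime)
    (hZ : (Z.map Prod.snd).count true = (Z.map Prod.fst).count true) :
    LStat (Z.length + 1) (dyckOf Z) = p ↔
      ∃ Z₁ Z₂, Z = Z₁ ++ (true, true) :: Z₂ ∧ (true, true) ∉ Z₁ ∧ (true, true) ∉ Z₂ ∧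
        (rStat (dyckOf Z) (Z₁.length + 1) = 1 ∧ sStat (dyckOf Z) (Z₁.length + 1) = p - 1 ∨
          rStat (dyckOf Z) (Z₁.length + 1) = p - 1 ∧ sStat (dyckOf Z) (Z₁.length + 1) = 1) := by
  have hp2 := hp.two_le
  rw [LStat, prod_eq_prime_iff _ _ hp]
  simp only [choose_add_eq_prime_iff _ _ hp, choose_add_eq_one_iff, Finset.mem_Icc,
    Nat.add_sub_cancel]
  constructor
  · rintro ⟨k, ⟨hk1, hk⟩, hrs, hj⟩
    obtain ⟨k, rfl⟩ : ∃ j, k = j + 1 := ⟨k - 1, by omega⟩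
    have hkZ : k < Z.length := by omega
    have hne : Z[k] = (true, true) := by
      by_contra h
      have := (rStat_sStat_dyckOf_eq_zero_iff hZ k hkZ).2 h
      omega
    refine ⟨Z.take k, Z.drop (k + 1), ?_, ?_, ?_, ?_⟩
    · rw [← hne, ← List.drop_eq_getElem_cons hkZ, List.take_append_drop]
    · intro hm
      obtain ⟨i, hi, he⟩ := List.mem_iff_getElem.1 hm
      rw [List.length_take] at hi
      rw [List.getElem_take] at he
      exact (rStat_sStat_dyckOf_eq_zero_iff hZ i (by omega)).1
        (hj (i + 1) ⟨by omega, by omega⟩ (by omega)) he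
    · intro hm
      obtain ⟨i, hi, he⟩ := List.mem_iff_getElem.1 hm
      rw [List.length_drop] at hi
      rw [List.getElem_drop] at he
      exact (rStat_sStat_dyckOf_eq_zero_iff hZ (k + 1 + i) (by omega)).1
        (hj (k + 1 + i + 1) ⟨by omega, by omega⟩ (by omega)) he
    · rwa [List.length_take, min_eq_left hkZ.le]
  · rintro ⟨Z₁, Z₂, e, h1, h2, hrs⟩
    have hlen : Z.length = Z₁.length + 1 + Z₂.length := by
      simp [e]; omega
    refine ⟨Z₁.length + 1, ⟨by omega, by omega⟩, hrs, ?_⟩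
    rintro j ⟨hj1, hj2⟩ hne
    obtain ⟨j, rfl⟩ : ∃ i, j = i + 1 := ⟨j - 1, by omega⟩
    refine (rStat_sStat_dyckOf_eq_zero_iff hZ j (by omega)).2 fun hj => ?_
    rcases Nat.lt_or_ge j Z₁.length with h | h
    · apply h1
      rw [← hj]
      simp [e, List.getElem_append_left h]
    · obtain ⟨i, rfl⟩ : ∃ i, j = Z₁.length + 1 + i := ⟨j - Z₁.length - 1, by omega⟩
      apply h2
      rw [← hj]
      simp [e, List.getElem_append_right, add_assoc, add_comm 1 i]

/-! ### Splitting at the unique pair of set bits -/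

/-- The pairs other than `(true, true)`, as steps of a path read away from the pair
`(true, true)` to the right. -/
def stepPair (a : Option Bool) : Bool × Bool := (a == some true, a == some false)

theorem stepPair_injective : Function.Injective stepPair := by
  unfold Function.Injective; decide

theorem swap_stepPair_injective : Function.Injective fun a => (stepPair a).swap :=
  Prod.swap_injective.comp stepPair_injective

theorem exists_map_stepPair_eq (Z : List (Bool × Bool)) (h : (true, true) ∉ Z) :
    ∃ w : List (Option Bool), w.map stepPair = Z := by
  have hz : ∀ z : Bool × Bool, z ≠ (true, true) → ∃ a, stepPair a = z := by
    rintro ⟨_ | _, _ | _⟩ h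
    exacts [⟨none, rfl⟩, ⟨some false, rfl⟩, ⟨some true, rfl⟩, absurd rfl h]
  induction Z with
  | nil => exact ⟨[], rfl⟩
  | cons z Z ih =>
    simp only [List.mem_cons, not_or] at h
    obtain ⟨w, rfl⟩ := ih h.2
    obtain ⟨a, rfl⟩ := hz z (Ne.symm h.1)
    exact ⟨a :: w, rfl⟩

theorem notMem_map_stepPair (w : List (Option Bool)) : (true, true) ∉ w.map stepPair := by
  have : ∀ a, stepPair a ≠ (true, true) := by decide
  simp [this]

/-- The list with a unique entry `(true, true)`, surrounded by the steps of `V` (read from right to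
left) and of `W`. -/
def pairList (V W : List (Option Bool)) : List (Bool × Bool) :=
  (V.map fun a => (stepPair a).swap).reverse ++ (true, true) :: W.map stepPair

theorem notMem_map_swap_stepPair (w : List (Option Bool)) :
    (true, true) ∉ (w.map fun a => (stepPair a).swap).reverse := by
  have : ∀ a, (stepPair a).swap ≠ (true, true) := by decide
  simp [this]

theorem exists_pairList_eq {Z₁ Z₂ : List (Bool × Bool)} (h₁ : (true, true) ∉ Z₁)
    (h₂ : (true, true) ∉ Z₂) :
    ∃ V W, V.length = Z₁.length ∧ pairList V W = Z₁ ++ (true, true) :: Z₂ := by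
  obtain ⟨V, hV⟩ := exists_map_stepPair_eq ((Z₁.map Prod.swap).reverse) (by simpa using h₁)
  obtain ⟨W, hW⟩ := exists_map_stepPair_eq Z₂ h₂
  refine ⟨V, W, by simpa using congrArg List.length hV, ?_⟩
  have h := congrArg (fun l => (l.map Prod.swap).reverse) hV
  simp only [List.map_map, List.map_reverse, Prod.swap_swap_eq, List.map_id,
    List.reverse_reverse] at h
  rw [pairList, hW, ← h]
  rfl

theorem pairList_injective {V W V' W' : List (Option Bool)} (h : pairList V W = pairList V' W') :
    V = V' ∧ W = W' := by
  obtain ⟨h1, -, h2⟩ := (List.append_cons_inj_of_notMem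
    (notMem_map_swap_stepPair V) (notMem_map_stepPair W)).1 h
  exact ⟨swap_stepPair_injective.list_map (List.reverse_injective h1),
    stepPair_injective.list_map h2⟩

theorem length_pairList (V W : List (Option Bool)) :
    (pairList V W).length = V.length + W.length + 1 := by
  simp [pairList, add_assoc]

theorem isPath_iff_take (t : ℕ) (w : List (Option Bool)) :
    IsPath t w ↔ w.count (some false) = t + w.count (some true) ∧
      ∀ i, (w.take i).count (some false) ≤ t + (w.take i).count (some true) := by
  refine and_congr_right fun _ => ⟨fun h i => h _ (List.take_prefix _ _), fun h p hp => ?_⟩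
  rw [List.prefix_iff_eq_take.1 hp]
  exact h _

theorem count_map_beq (w : List (Option Bool)) (b : Bool) :
    (w.map fun a => a == some b).count true = w.count (some b) := by
  rw [List.count, List.countP_map, List.count]
  congr 1
  ext a
  simp

theorem map_fst_pairList (V W : List (Option Bool)) :
    (pairList V W).map Prod.fst = (V.map (· == some false)).reverse ++
      true :: W.map (· == some true) := by
  simp [pairList, stepPair, Function.comp_def]

theorem map_snd_pairList (V W : List (Option Bool)) :
    (pairList V W).map Prod.snd = (V.map (· == some true)).reverse ++
      true :: W.map (· == some false) := by
  simp [pairList, stepPair, Function.comp_def]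

theorem count_fst_take_pairList (V W : List (Option Bool)) (i : ℕ) :
    (((pairList V W).take i).map Prod.fst).count true =
      (V.drop (V.length - i)).count (some false) + if V.length < i then
        1 + (W.take (i - V.length - 1)).count (some true) else 0 := by
  rw [List.map_take, map_fst_pairList, List.take_append, List.take_reverse, List.count_append,
    List.count_reverse, List.length_reverse, List.length_map, ← List.map_drop, count_map_beq]
  split_ifs with h
  · obtain ⟨j, rfl⟩ : ∃ j, i = V.length + (j + 1) := ⟨i - V.length - 1, by omega⟩
    simp [← List.map_take, count_map_beq, add_comm]
  · simp [Nat.sub_eq_zero_of_le (not_lt.1 h)]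

theorem count_snd_take_pairList (V W : List (Option Bool)) (i : ℕ) :
    (((pairList V W).take i).map Prod.snd).count true =
      (V.drop (V.length - i)).count (some true) + if V.length < i then
        1 + (W.take (i - V.length - 1)).count (some false) else 0 := by
  rw [List.map_take, map_snd_pairList, List.take_append, List.take_reverse, List.count_append,
    List.count_reverse, List.length_reverse, List.length_map, ← List.map_drop, count_map_beq]
  split_ifs with h
  · obtain ⟨j, rfl⟩ : ∃ j, i = V.length + (j + 1) := ⟨i - V.length - 1, by omega⟩
    simp [← List.map_take, count_map_beq, add_comm]
  · simp [Nat.sub_eq_zero_of_le (not_lt.1 h)]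

theorem count_fst_pairList (V W : List (Option Bool)) :
    ((pairList V W).map Prod.fst).count true =
      V.count (some false) + 1 + W.count (some true) := by
  rw [map_fst_pairList, List.count_append, List.count_reverse, count_map_beq, List.count_cons_self,
    count_map_beq]
  omega

theorem count_snd_pairList (V W : List (Option Bool)) :
    ((pairList V W).map Prod.snd).count true =
      V.count (some true) + 1 + W.count (some false) := by
  rw [map_snd_pairList, List.count_append, List.count_reverse, count_map_beq, List.count_cons_self,
    count_map_beq]
  omega

theorem balanced_pairList_iff (V W : List (Option Bool)) :
    (((pairList V W).map Prod.snd).count true = ((pairList V W).map Prod.fst).count true ∧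
      ∀ i, (((pairList V W).take i).map Prod.snd).count true ≤
        (((pairList V W).take i).map Prod.fst).count true) ↔
      ∃ t, IsPath t V ∧ IsPath t W := by
  have hV (a : Option Bool) (i : ℕ) : (V.take i).count a + (V.drop i).count a = V.count a := by
    rw [← List.count_append, List.take_append_drop]
  simp only [isPath_iff_take, count_fst_pairList, count_snd_pairList, count_fst_take_pairList,
    count_snd_take_pairList]
  constructor
  · rintro ⟨hc, h⟩
    have h0 := h V.length
    simp only [Nat.sub_self, List.drop_zero, lt_irrefl, if_false] at h0
    refine ⟨V.count (some false) - V.count (some true), ⟨by omega, fun i => ?_⟩, by omega,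
      fun i => ?_⟩
    · rcases le_or_gt i V.length with hi | hi
      · have := h (V.length - i)
        simp only [Nat.sub_sub_self hi, show ¬ V.length < V.length - i by omega, if_false] at this
        have h1 := hV (some true) i
        have h2 := hV (some false) i
        omega
      · rw [List.take_of_length_le hi.le]
        omega
    · have := h (V.length + 1 + i)
      simp only [show V.length - (V.length + 1 + i) = 0 by omega, List.drop_zero,
        show V.length < V.length + 1 + i by omega, if_true,
        show V.length + 1 + i - V.length - 1 = i by omega] at this
      omega
  · rintro ⟨t, ⟨hV0, hV1⟩, hW0, hW1⟩
    refine ⟨by omega, fun i => ?_⟩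
    have h1 := hV (some true) (V.length - i)
    have h2 := hV (some false) (V.length - i)
    have h3 := hV1 (V.length - i)
    split_ifs with hi
    · have := hW1 (i - V.length - 1)
      simp only [show V.length - i = 0 by omega, List.drop_zero]
      omega
    · omega

theorem rStat_dyckOf_pairList {t : ℕ} {V W : List (Option Bool)} (hV : IsPath t V)
    (hW : IsPath t W) :
    rStat (dyckOf (pairList V W)) (V.length + 1) =
      gap (V.map (· == some false) ++ [true]) t := by
  have hb := (balanced_pairList_iff V W).2 ⟨t, hV, hW⟩
  have hlt : V.length < (pairList V W).length := by rw [length_pairList]; omega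
  have hget : (pairList V W)[V.length] = (true, true) := by
    simp [pairList, List.getElem_append_right]
  have hc := hV.1
  rw [rStat_dyckOf hb.1 _ hlt, hget, count_snd_take_pairList, map_fst_pairList]
  simp only [Nat.sub_self, List.drop_zero, lt_irrefl, if_false, if_true, add_zero]
  rw [List.append_assoc, List.cons_append, gap_append_true_left, gap_reverse, count_map_beq]
  · congr 1; omega
  · rw [count_map_beq]; omega
  · rw [List.count_reverse, count_map_beq]; omega

theorem sStat_dyckOf_pairList {t : ℕ} {V W : List (Option Bool)} (hV : IsPath t V)
    (hW : IsPath t W) :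
    sStat (dyckOf (pairList V W)) (V.length + 1) =
      gap (W.map (· == some false) ++ [true]) t := by
  have hb := (balanced_pairList_iff V W).2 ⟨t, hV, hW⟩
  have hlt : V.length < (pairList V W).length := by rw [length_pairList]; omega
  have hget : (pairList V W)[V.length] = (true, true) := by
    simp [pairList, List.getElem_append_right]
  have hc := hV.1
  rw [sStat_dyckOf hb.1 _ hlt, hget, count_fst_take_pairList, map_snd_pairList]
  simp only [Nat.sub_self, List.drop_zero, lt_irrefl, if_false, if_true, add_zero]
  have hj : V.count (some false) + 1 =
      (V.map (· == some true)).reverse.count true + 1 + t := by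
    rw [List.count_reverse, count_map_beq]; omega
  rw [List.append_assoc, List.cons_append, hj, gap_append_true_cons]

/-! ### Counting -/

/-- Pairs of paths of total length `N` that start at a common height, with prescribed gaps. -/
def gapPairs (a b N : ℕ) : Set (List (Option Bool) × List (Option Bool)) :=
  {x | x.1.length + x.2.length = N ∧ ∃ t, IsGapPath a t 0 x.1 ∧ IsGapPath b t 0 x.2}

theorem IsPath.eq {t u : ℕ} {w : List (Option Bool)} (ht : IsPath t w) (hu : IsPath u w) :
    t = u := by
  have := ht.1
  have := hu.1
  omega

theorem IsPath.le_length {t : ℕ} {w : List (Option Bool)} (ht : IsPath t w) : t ≤ w.length := by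
  have := ht.1
  have := w.count_le_length (a := some false)
  omega

theorem gapPairs_eq_biUnion (a b N : ℕ) :
    gapPairs a b N =
      ⋃ i ∈ (↑(Finset.range (N + 1) ×ˢ Finset.HasAntidiagonal.antidiagonal N) : Set (ℕ × ℕ × ℕ)),
        {w | w.length = i.2.1 ∧ IsGapPath a i.1 0 w} ×ˢ
          {w | w.length = i.2.2 ∧ IsGapPath b i.1 0 w} := by
  ext ⟨V, W⟩
  simp only [gapPairs, Set.mem_ofPred_eq, Set.mem_iUnion, Set.mem_prod, exists_prop,
    Finset.coe_product, Finset.coe_range, Set.mem_Iio, Finset.mem_coe, Finset.HasAntidiagonal.mem_antidiagonal,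
    Prod.exists]
  constructor
  · rintro ⟨hN, t, hV, hW⟩
    have := IsPath.le_length hV.1
    exact ⟨t, V.length, W.length, ⟨by omega, hN⟩, ⟨rfl, hV⟩, rfl, hW⟩
  · rintro ⟨t, k, l, ⟨-, hN⟩, ⟨rfl, hV⟩, rfl, hW⟩
    exact ⟨hN, t, hV, hW⟩

theorem finite_gapPairs (a b N : ℕ) : (gapPairs a b N).Finite := by
  rw [gapPairs_eq_biUnion]
  exact (Finset.finite_toSet _).biUnion fun i _ =>
    (finite_length_eq_and _ _).prod (finite_length_eq_and _ _)

theorem ncard_gapPairs (a b N : ℕ) :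
    ((gapPairs a b N).ncard : ℚ) = ∑ t ∈ Finset.range (N + 1),
      PowerSeries.coeff N (wordGF (IsGapPath a t 0) * wordGF (IsGapPath b t 0)) := by
  rw [gapPairs_eq_biUnion, (Finset.finite_toSet _).ncard_biUnion, finsum_mem_coe_finset,
    Finset.sum_product]
  · simp [PowerSeries.coeff_mul, wordGF, Set.ncard_prod]
  · exact fun i _ => (finite_length_eq_and _ _).prod (finite_length_eq_and _ _)
  · rintro ⟨t, k, l⟩ - ⟨t', k', l'⟩ - hne
    refine Set.disjoint_left.2 ?_
    rintro ⟨V, W⟩ ⟨⟨h1, h2⟩, h3, h4⟩ ⟨⟨h1', h2'⟩, h3', h4'⟩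
    have := IsPath.eq h2.1 h2'.1
    simp_all

theorem disjoint_gapPairs {a b a' b' : ℕ} (h : a ≠ a') (N : ℕ) :
    Disjoint (gapPairs a b N) (gapPairs a' b' N) := by
  refine Set.disjoint_left.2 ?_
  rintro ⟨V, W⟩ ⟨-, t, hV, -⟩ ⟨-, t', hV', -⟩
  obtain rfl : t = t' := IsPath.eq hV.1 hV'.1
  exact h (hV.2.symm.trans hV'.2)

theorem dyckL_add_two (N : ℕ) {p : ℕ} (hp : p.Prime) :
    dyckL (N + 2) p = (fun x => dyckOf (pairList x.1 x.2)) ''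
      (gapPairs 1 (p - 1) N ∪ gapPairs (p - 1) 1 N) := by
  ext w
  constructor
  · rintro ⟨hw, hL⟩
    obtain ⟨Z, hlen, hZ, rfl⟩ := exists_dyckOf_eq hw
    rw [show N + 2 = Z.length + 1 by omega] at hw hL
    obtain ⟨Z₁, Z₂, rfl, h₁, h₂, hrs⟩ := (LStat_dyckOf_eq_prime_iff hp hZ).1 hL
    obtain ⟨V, W, hV, hVW⟩ := exists_pairList_eq h₁ h₂
    rw [← hVW] at hw hZ hrs hlen ⊢
    obtain ⟨t, htV, htW⟩ := (balanced_pairList_iff V W).1 ⟨hZ, (isDyckWord_dyckOf_iff hZ).1 hw⟩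
    rw [← hV, rStat_dyckOf_pairList htV htW, sStat_dyckOf_pairList htV htW] at hrs
    rw [length_pairList] at hlen
    refine ⟨(V, W), ?_, rfl⟩
    rcases hrs with ⟨h1, h2⟩ | ⟨h1, h2⟩
    · exact Or.inl ⟨by simp; omega, t, ⟨htV, h1⟩, htW, h2⟩
    · exact Or.inr ⟨by simp; omega, t, ⟨htV, h1⟩, htW, h2⟩
  · rintro ⟨⟨V, W⟩, hVW, rfl⟩
    obtain ⟨hN, t, htV, htW, hg⟩ : V.length + W.length = N ∧ ∃ t, IsPath t V ∧ IsPath t W ∧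
        (gap (V.map (· == some false) ++ [true]) t = 1 ∧
          gap (W.map (· == some false) ++ [true]) t = p - 1 ∨
        gap (V.map (· == some false) ++ [true]) t = p - 1 ∧
          gap (W.map (· == some false) ++ [true]) t = 1) := by
      rcases hVW with ⟨hN, t, h1, h2⟩ | ⟨hN, t, h1, h2⟩
      · exact ⟨hN, t, h1.1, h2.1, Or.inl ⟨h1.2, h2.2⟩⟩
      · exact ⟨hN, t, h1.1, h2.1, Or.inr ⟨h1.2, h2.2⟩⟩
    have hb := (balanced_pairList_iff V W).2 ⟨t, htV, htW⟩
    have hlen : N + 2 = (pairList V W).length + 1 := by rw [length_pairList]; omega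
    rw [dyckL, Set.mem_ofPred_eq, hlen, isDyckWord_dyckOf_iff hb.1,
      LStat_dyckOf_eq_prime_iff hp hb.1]
    refine ⟨hb.2, _, _, rfl, notMem_map_swap_stepPair V, notMem_map_stepPair W, ?_⟩
    rw [List.length_reverse, List.length_map, rStat_dyckOf_pairList htV htW,
      sStat_dyckOf_pairList htV htW]
    exact hg

theorem dyckOf_injOn :
    Set.InjOn dyckOf {Z | (Z.map Prod.snd).count true = (Z.map Prod.fst).count true} := by
  intro Z hZ Z' hZ' h
  have h1 := (turnBits_dyckOf hZ).1
  have h2 := (turnBits_dyckOf hZ).2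
  rw [h, (turnBits_dyckOf hZ').1] at h1
  rw [h, (turnBits_dyckOf hZ').2] at h2
  rw [← List.zip_unzip Z, ← List.zip_unzip Z', List.unzip_eq_map, List.unzip_eq_map,
    List.append_cancel_right h1, List.append_cancel_right h2]

theorem ncard_dyckL_add_two (N : ℕ) {p : ℕ} (hp : p.Prime) (hp3 : 3 ≤ p) :
    (dyckL (N + 2) p).ncard = (gapPairs 1 (p - 1) N).ncard + (gapPairs (p - 1) 1 N).ncard := by
  rw [dyckL_add_two N hp, Set.InjOn.ncard_image, Set.ncard_union_eq
    (disjoint_gapPairs (by omega) N) (finite_gapPairs _ _ _) (finite_gapPairs _ _ _)]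
  have hbal : ∀ x ∈ gapPairs 1 (p - 1) N ∪ gapPairs (p - 1) 1 N,
      ((pairList x.1 x.2).map Prod.snd).count true =
        ((pairList x.1 x.2).map Prod.fst).count true := by
    rintro x (⟨-, t, h1, h2⟩ | ⟨-, t, h1, h2⟩) <;>
      exact ((balanced_pairList_iff x.1 x.2).2 ⟨t, h1.1, h2.1⟩).1
  intro x hx y hy h
  obtain ⟨h1, h2⟩ := pairList_injective (dyckOf_injOn (hbal x hx) (hbal y hy) h)
  exact Prod.ext h1 h2

theorem dyckL_eq_empty {n p : ℕ} (hn : n ≤ 1) (hp3 : 3 ≤ p) : dyckL n p = ∅ := by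
  refine Set.eq_empty_of_forall_notMem ?_
  rintro w ⟨-, hL⟩
  rw [LStat, Finset.Icc_eq_empty (by omega), Finset.prod_empty] at hL
  omega

open PowerSeries in
theorem coeff_sum_range_pow (g F R : PowerSeries ℚ) (N : ℕ) (hR : R * (1 - (X * F) ^ 2) = 1) :
    ∑ t ∈ Finset.range (N + 1), coeff N (g * ((X * F) ^ t * (X * F) ^ t)) = coeff N (g * R) := by
  have h : R = ∑ t ∈ Finset.range (N + 1), (X * F) ^ t * (X * F) ^ t +
      X ^ (N + 1) * (X ^ (N + 1) * F ^ (2 * (N + 1)) * R) := by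
    have hs := geom_sum_mul_neg ((X * F) ^ 2) (N + 1)
    have he : ∑ t ∈ Finset.range (N + 1), (X * F) ^ t * (X * F) ^ t =
        ∑ t ∈ Finset.range (N + 1), ((X * F) ^ 2) ^ t :=
      Finset.sum_congr rfl fun t _ => by ring
    rw [he]
    calc R = R * ((∑ t ∈ Finset.range (N + 1), ((X * F) ^ 2) ^ t) * (1 - (X * F) ^ 2)) +
          X ^ (N + 1) * (X ^ (N + 1) * F ^ (2 * (N + 1)) * R) := by rw [hs]; ring
      _ = (∑ t ∈ Finset.range (N + 1), ((X * F) ^ 2) ^ t) * (R * (1 - (X * F) ^ 2)) +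
          X ^ (N + 1) * (X ^ (N + 1) * F ^ (2 * (N + 1)) * R) := by ring
      _ = _ := by rw [hR, mul_one]
  conv_rhs => rw [h, mul_add, mul_left_comm g (X ^ (N + 1)), map_add, coeff_X_pow_mul',
    if_neg (by omega), add_zero, Finset.mul_sum, map_sum]

open PowerSeries in
/-- **Theorem (generating function for L = p, p an odd prime).**
`Σ |𝒟ₙᵖ| xⁿ = 2·xᵖ·(1 + x·m(x))^{p-2}·(x²·(x·m(x))′ + 1)`. -/
theorem dyck_L_eq_prime_gf (p : ℕ) (hp : p.Prime) (hp3 : 3 ≤ p) :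
    PowerSeries.mk (fun n => ((dyckL n p).ncard : ℚ)) =
      2 * X ^ p * (1 + X * motzkinGF) ^ (p - 2) *
        (X ^ 2 * PowerSeries.derivative ℚ (X * motzkinGF) + 1) := by
  rw [motzkinGF_eq_motzkinSeries]
  set R := X ^ 2 * PowerSeries.derivative ℚ (X * motzkinSeries) + 1
  obtain ⟨c, rfl⟩ : ∃ c, p = c + 2 := ⟨p - 2, by omega⟩
  set g := (X * (1 + X * motzkinSeries)) ^ c with hg
  have hrhs : 2 * X ^ (c + 2) * (1 + X * motzkinSeries) ^ (c + 2 - 2) * R =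
      X ^ 2 * (g * R + g * R) := by
    rw [hg, mul_pow, Nat.add_sub_cancel]
    ring
  rw [hrhs]
  ext n
  rw [coeff_mk, coeff_X_pow_mul']
  split_ifs with hn
  · obtain ⟨N, rfl⟩ : ∃ N, n = N + 2 := ⟨n - 2, by omega⟩
    have h1 (t : ℕ) : wordGF (IsGapPath 1 t 0) = (X * motzkinSeries) ^ t := by
      simpa using wordGF_isGapPath 0 t 0
    have h2 (t : ℕ) : wordGF (IsGapPath (c + 2 - 1) t 0) = g * (X * motzkinSeries) ^ t :=
      wordGF_isGapPath c t 0
    have h3 := coeff_sum_range_pow g motzkinSeries R N derivative_identity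
    rw [ncard_dyckL_add_two N hp hp3, Nat.cast_add, ncard_gapPairs, ncard_gapPairs,
      Nat.add_sub_cancel, map_add, ← h3]
    simp only [h1, h2, mul_assoc, mul_left_comm _ g]
  · rw [dyckL_eq_empty (by omega) hp3]
    simp
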